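/- (De Moivre–Laplace, local form.) Let p ∈ (0,1), q = 1 − p, and let S_n be a binomial random variable with parameters n and p. Let (A_n)_{n≥1} be a nondecreasing sequence of reals with A_1 ≥ 1 and A_n / n^{1/6} → 0 as n → ∞. Then sup_k | √(2π npq) · ℙ[S_n = k] · exp( (np − k)² / (2npq) ) − 1 | → 0 as n → ∞, where the supremum is over all integers k with |np − k| ≤ A_n √(npq). -/

import Mathlib

/-!
The proof applies Stirling's formula to the three factorials of `n.choose k`. With `m = n - k`,
`d = n p - k` and `σ` Mathlib's `Stirling.stirlingSeq`, the quantity in question equals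
`√π σ_n / (σ_k σ_m) · √((n p / k) (n q / m)) · (n p / k) ^ k (n q / m) ^ m exp (d² / (2 n p q))`
(`binomial_stirling`). The first factor tends to `1` because `σ → √π`, and the second because
`k / n → p` and `m / n → q`. For the third, let `h x = (1 + x) log (1 + x) - x - x² / 2`. Since
`k = n p (1 + x)` and `m = n q (1 + y)` with `x = -d / (n p)`, `y = d / (n q)`, the linear terms
cancel and the quadratic ones are exactly `d² / (2 n p q)`, so the third factor is
`exp (-(n p h x + n q h y))`. As `h x = O(x³)`, its exponent is `O(|d|³ / n²)`, and
`|d|³ / n² ≤ (A n / n ^ (1/6))³ → 0`.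

Uniformity in `k` is expressed by taking all limits along the filter `window p A` on pairs `(n, k)`.
-/

open Filter

/-- The filter on pairs `(n, k)` that expresses `n → ∞` uniformly over all `k` with
`|n p - k| ≤ A n √(n p q)`. -/
def window (p : ℝ) (A : ℕ → ℝ) : Filter (ℕ × ℕ) :=
  comap Prod.fst atTop ⊓
    𝓟 {z | |(z.1 : ℝ) * p - z.2| ≤ A z.1 * Real.sqrt ((z.1 : ℝ) * p * (1 - p))}

lemma factorial_eq_stirlingSeq {n : ℕ} (hn : n ≠ 0) :
    (n.factorial : ℝ) = Stirling.stirlingSeq n * (√(2 * n) * (n / Real.exp 1) ^ n) := by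
  unfold Stirling.stirlingSeq
  have : (0 : ℝ) < n := by positivity
  field_simp

/-- Stirling's formula, in the exact form `n! = σ_n √(2 n) (n / e) ^ n`, inserted into the
binomial probability of `k` successes and `m` failures. -/
lemma binomial_stirling {p q : ℝ} (hp : 0 < p) (hq : 0 < q) {k m : ℕ} (hk : k ≠ 0) (hm : m ≠ 0) :
    √(2 * Real.pi * ((k + m : ℕ) : ℝ) * p * q) * (((k + m).choose k : ℝ) * p ^ k * q ^ m) =
      √Real.pi * Stirling.stirlingSeq (k + m) /
          (Stirling.stirlingSeq k * Stirling.stirlingSeq m) *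
        √((((k + m : ℕ) : ℝ) * p / k) * (((k + m : ℕ) : ℝ) * q / m)) *
        ((((k + m : ℕ) : ℝ) * p / k) ^ k * (((k + m : ℕ) : ℝ) * q / m) ^ m) := by
  have hn : k + m ≠ 0 := by omega
  have hch : ((k + m).choose k : ℝ) = (k + m).factorial / (k.factorial * m.factorial) := by
    rw [Nat.cast_choose ℝ (Nat.le_add_right k m), Nat.add_sub_cancel_left]
  have hpos : ∀ j : ℕ, j ≠ 0 → 0 < Stirling.stirlingSeq j := by
    intro j hj
    obtain ⟨i, rfl⟩ := Nat.exists_eq_succ_of_ne_zero hj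
    exact Stirling.stirlingSeq'_pos i
  have h1 := hpos k hk
  have h2 := hpos m hm
  rw [hch, factorial_eq_stirlingSeq hn, factorial_eq_stirlingSeq hk, factorial_eq_stirlingSeq hm]
  generalize Stirling.stirlingSeq (k + m) = s at *
  generalize Stirling.stirlingSeq k = a at *
  generalize Stirling.stirlingSeq m = b at *
  have hk' : (0 : ℝ) < k := by positivity
  have hm' : (0 : ℝ) < m := by positivity
  have hn' : (0 : ℝ) < ((k + m : ℕ) : ℝ) := by positivity
  have hsqrt : √(2 * Real.pi * ((k + m : ℕ) : ℝ) * p * q) * √(2 * ((k + m : ℕ) : ℝ)) =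
      √Real.pi * √((((k + m : ℕ) : ℝ) * p / k) * (((k + m : ℕ) : ℝ) * q / m)) *
        (√(2 * k) * √(2 * m)) := by
    rw [← Real.sqrt_mul (by positivity), ← Real.sqrt_mul (by positivity),
      ← Real.sqrt_mul (by positivity), ← Real.sqrt_mul (by positivity)]
    congr 1
    field_simp
  have hpow : (((k + m : ℕ) : ℝ) / Real.exp 1) ^ (k + m) * p ^ k * q ^ m =
      ((((k + m : ℕ) : ℝ) * p / k) ^ k * (((k + m : ℕ) : ℝ) * q / m) ^ m) *
        ((k / Real.exp 1) ^ k * (m / Real.exp 1) ^ m) := by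
    generalize ((k + m : ℕ) : ℝ) = n at *
    simp only [div_pow, mul_pow, pow_add]
    field_simp
  have hs1 : 0 < √(2 * (k : ℝ)) := by positivity
  have hs2 : 0 < √(2 * (m : ℝ)) := by positivity
  have he1 : 0 < ((k : ℝ) / Real.exp 1) ^ k := by positivity
  have he2 : 0 < ((m : ℝ) / Real.exp 1) ^ m := by positivity
  generalize √(2 * (k : ℝ)) = s1 at *
  generalize √(2 * (m : ℝ)) = s2 at *
  generalize ((k : ℝ) / Real.exp 1) ^ k = e1 at *
  generalize ((m : ℝ) / Real.exp 1) ^ m = e2 at *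
  generalize √(2 * Real.pi * ((k + m : ℕ) : ℝ) * p * q) = t1 at *
  generalize √(2 * ((k + m : ℕ) : ℝ)) = t2 at *
  generalize √((((k + m : ℕ) : ℝ) * p / k) * (((k + m : ℕ) : ℝ) * q / m)) = t3 at *
  generalize (((k + m : ℕ) : ℝ) / Real.exp 1) ^ (k + m) = r at *
  generalize (((k + m : ℕ) : ℝ) * p / k) ^ k * (((k + m : ℕ) : ℝ) * q / m) ^ m = w at *
  calc t1 * (s * (t2 * r) / (a * (s1 * e1) * (b * (s2 * e2))) * p ^ k * q ^ m)
      = s * (t1 * t2) * (r * p ^ k * q ^ m) / (a * (s1 * e1) * (b * (s2 * e2))) := by ring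
    _ = _ := by
      rw [hsqrt, hpow]
      field_simp

/-- The third-order Taylor bound for `(1 + x) log (1 + x)` at `0`. -/
lemma abs_entropy_remainder_le {x : ℝ} (hx : |x| ≤ 1 / 2) :
    |(1 + x) * Real.log (1 + x) - x - x ^ 2 / 2| ≤ 4 * |x| ^ 3 := by
  have h := Real.abs_log_sub_add_sum_range_le (x := -x) (by rw [abs_neg]; linarith) 2
  simp only [Finset.sum_range_succ, Finset.sum_range_zero, abs_neg, sub_neg_eq_add] at h
  norm_num at h
  have hx3 : 0 ≤ |x| ^ 3 := by positivity
  have h' : |-x + x ^ 2 / 2 + Real.log (1 + x)| ≤ 2 * |x| ^ 3 := by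
    refine h.trans ?_
    rw [div_le_iff₀ (by linarith)]
    nlinarith
  set r := -x + x ^ 2 / 2 + Real.log (1 + x) with hr
  have e : (1 + x) * Real.log (1 + x) - x - x ^ 2 / 2 = (1 + x) * r - x ^ 3 / 2 := by
    rw [hr]; ring
  rw [e]
  have h1 : |1 + x| ≤ 3 / 2 := by
    rw [abs_le] at *; constructor <;> linarith
  calc |(1 + x) * r - x ^ 3 / 2| ≤ |(1 + x) * r| + |x ^ 3 / 2| := abs_sub _ _
    _ = |1 + x| * |r| + |x| ^ 3 / 2 := by rw [abs_mul, abs_div, abs_pow]; norm_num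
    _ ≤ 3 / 2 * (2 * |x| ^ 3) + |x| ^ 3 / 2 := by gcongr
    _ ≤ 4 * |x| ^ 3 := by linarith

/-- The large-deviation exponent of the binomial law, compensated by the Gaussian one, has size
`O(|d|³ / n²)`. -/
lemma abs_exponent_le {n p q d : ℝ} (hn : 0 < n) (hp : 0 < p) (hq : 0 < q) (hpq : p + q = 1)
    (h1 : |d / n| ≤ p / 2) (h2 : |d / n| ≤ q / 2) :
    |(n * p - d) * Real.log (n * p / (n * p - d)) + (n * q + d) * Real.log (n * q / (n * q + d)) +
        d ^ 2 / (2 * n * p * q)| ≤ (4 / p ^ 2 + 4 / q ^ 2) * (|d| ^ 3 / n ^ 2) := by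
  have a1 : |-(d / n / p)| ≤ 1 / 2 := by
    rw [abs_neg, abs_div, abs_of_pos hp, div_le_iff₀ hp]; linarith
  have a2 : |d / n / q| ≤ 1 / 2 := by
    rw [abs_div, abs_of_pos hq, div_le_iff₀ hq]; linarith
  have b1 := abs_entropy_remainder_le a1
  have b2 := abs_entropy_remainder_le a2
  have e1 : n * p / (n * p - d) = (1 + -(d / n / p))⁻¹ := by
    rw [show n * p - d = n * p * (1 + -(d / n / p)) by field_simp; ring]
    rw [div_mul_eq_div_div, div_self (by positivity), one_div]
  have e2 : n * q / (n * q + d) = (1 + d / n / q)⁻¹ := by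
    rw [show n * q + d = n * q * (1 + d / n / q) by field_simp]
    rw [div_mul_eq_div_div, div_self (by positivity), one_div]
  rw [e1, e2, Real.log_inv, Real.log_inv]
  set L1 := Real.log (1 + -(d / n / p))
  set L2 := Real.log (1 + d / n / q)
  obtain rfl : q = 1 - p := by linarith
  have e : (n * p - d) * -L1 + (n * (1 - p) + d) * -L2 + d ^ 2 / (2 * n * p * (1 - p)) =
      -(n * p * ((1 + -(d / n / p)) * L1 - -(d / n / p) - (-(d / n / p)) ^ 2 / 2)) -
      n * (1 - p) * ((1 + d / n / (1 - p)) * L2 - d / n / (1 - p) - (d / n / (1 - p)) ^ 2 / 2) := by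
    field_simp
    ring
  rw [e]
  refine (abs_sub _ _).trans ?_
  rw [abs_neg, abs_mul, abs_mul (n * (1 - p)), abs_of_pos (mul_pos hn hp),
    abs_of_pos (mul_pos hn hq)]
  calc _ ≤ n * p * (4 * |-(d / n / p)| ^ 3) + n * (1 - p) * (4 * |d / n / (1 - p)| ^ 3) := by
        gcongr
    _ = _ := by
        rw [abs_neg, abs_div, abs_div, abs_div (d / n), abs_div, abs_of_pos hn, abs_of_pos hp,
          abs_of_pos hq]
        field_simp

/-- **De Moivre–Laplace theorem, local form.**  Let `S_n` be binomial with
parameters `n` and `p` (so `ℙ[S_n = k] = C(n,k) p^k q^(n-k)` with `q = 1 - p`),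
and let `(A_n)_{n≥1}` be a nondecreasing sequence with `A_1 ≥ 1` and
`A_n / n^(1/6) → 0`.  Then, uniformly over all integers `k` with
`|np - k| ≤ A_n √(npq)`,
`√(2π npq) · ℙ[S_n = k] · exp((np - k)²/(2npq)) → 1` as `n → ∞`. -/
theorem deMoivre_laplace_local (p : ℝ) (hp0 : 0 < p) (hp1 : p < 1)
    (A : ℕ → ℝ) (hA1 : 1 ≤ A 1)
    (hAmono : ∀ m n : ℕ, 1 ≤ m → m ≤ n → A m ≤ A n)
    (hAsmall : Tendsto (fun n : ℕ => A n / (n : ℝ) ^ ((1 : ℝ) / 6)) atTop (nhds 0)) :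
    ∀ ε : ℝ, 0 < ε → ∃ N₀ : ℕ, ∀ n : ℕ, N₀ ≤ n → ∀ k : ℕ,
      |(n : ℝ) * p - k| ≤ A n * Real.sqrt ((n : ℝ) * p * (1 - p)) →
      |Real.sqrt (2 * Real.pi * (n : ℝ) * p * (1 - p)) *
          ((n.choose k : ℝ) * p ^ k * (1 - p) ^ (n - k)) *
          Real.exp (((n : ℝ) * p - k) ^ 2 / (2 * (n : ℝ) * p * (1 - p))) - 1| ≤ ε := by
  have hq0 : 0 < 1 - p := by linarith
  set F : ℕ × ℕ → ℝ := fun z => Real.sqrt (2 * Real.pi * (z.1 : ℝ) * p * (1 - p)) *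
          ((z.1.choose z.2 : ℝ) * p ^ z.2 * (1 - p) ^ (z.1 - z.2)) *
          Real.exp (((z.1 : ℝ) * p - z.2) ^ 2 / (2 * (z.1 : ℝ) * p * (1 - p))) with hF
  suffices hlim : Tendsto F (window p A) (nhds 1) by
    intro ε hε
    have h := (Metric.tendsto_nhds.1 hlim) ε hε
    rw [window, eventually_inf_principal, eventually_comap] at h
    obtain ⟨N, hN⟩ := eventually_atTop.1 h
    exact ⟨N, fun n hn k hk => (hN n hn (n, k) rfl hk).le⟩
  have hfst : Tendsto (Prod.fst : ℕ × ℕ → ℕ) (window p A) atTop :=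
    tendsto_comap.mono_left inf_le_left
  have hfstR : Tendsto (fun z : ℕ × ℕ => (z.1 : ℝ)) (window p A) atTop :=
    tendsto_natCast_atTop_atTop.comp hfst
  have hmem : ∀ᶠ z in window p A,
      |(z.1 : ℝ) * p - z.2| ≤ A z.1 * Real.sqrt ((z.1 : ℝ) * p * (1 - p)) :=
    mem_inf_of_right (mem_principal_self _)
  have ha := hAsmall.comp hfst
  set a : ℕ × ℕ → ℝ := (fun n : ℕ => A n / (n : ℝ) ^ ((1 : ℝ) / 6)) ∘ Prod.fst with ha_def
  -- `√(n p q) ≤ n ^ (1/2)`, so `|d| ≤ a n ^ (2/3)`; the two bounds below follow from it.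
  have hd : ∀ᶠ z in window p A, |(z.1 : ℝ) * p - z.2| ≤ a z * (z.1 : ℝ) ^ ((2 : ℝ) / 3) ∧
      1 ≤ (z.1 : ℝ) ∧ 0 ≤ a z := by
    filter_upwards [hmem, hfst.eventually_ge_atTop 1] with z hz h1
    have h1R : (1 : ℝ) ≤ z.1 := by exact_mod_cast h1
    have hA : 1 ≤ A z.1 := hA1.trans (hAmono 1 z.1 le_rfl h1)
    have hn6 : 0 < (z.1 : ℝ) ^ ((1 : ℝ) / 6) := by positivity
    refine ⟨hz.trans ?_, h1R, ?_⟩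
    · have hs : √((z.1 : ℝ) * p * (1 - p)) ≤ (z.1 : ℝ) ^ ((1 : ℝ) / 2) := by
        rw [← Real.sqrt_eq_rpow]
        apply Real.sqrt_le_sqrt
        have : p * (1 - p) ≤ 1 := by nlinarith
        nlinarith
      have hr : (z.1 : ℝ) ^ ((2 : ℝ) / 3) =
          (z.1 : ℝ) ^ ((1 : ℝ) / 6) * (z.1 : ℝ) ^ ((1 : ℝ) / 2) := by
        rw [← Real.rpow_add (by linarith)]; norm_num
      have : a z * (z.1 : ℝ) ^ ((2 : ℝ) / 3) = A z.1 * (z.1 : ℝ) ^ ((1 : ℝ) / 2) := by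
        rw [hr]; simp only [ha_def, Function.comp]; field_simp
      rw [this]
      gcongr
    · simp only [ha_def, Function.comp]; positivity
  have hu : Tendsto (fun z : ℕ × ℕ => ((z.1 : ℝ) * p - z.2) / z.1) (window p A) (nhds 0) := by
    refine squeeze_zero_norm' ?_ ha
    filter_upwards [hd] with z ⟨h, h1, h0⟩
    rw [Real.norm_eq_abs, abs_div, abs_of_pos (by linarith : (0 : ℝ) < z.1),
      div_le_iff₀ (by linarith)]
    refine h.trans (mul_le_mul_of_nonneg_left ?_ h0)
    exact Real.rpow_le_self_of_one_le h1 (by norm_num)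
  have hc : Tendsto (fun z : ℕ × ℕ => |(z.1 : ℝ) * p - z.2| ^ 3 / (z.1 : ℝ) ^ 2)
      (window p A) (nhds 0) := by
    have ha3 : Tendsto (fun z => a z ^ 3) (window p A) (nhds 0) := by simpa using ha.pow 3
    refine squeeze_zero' (Eventually.of_forall fun z => by positivity) ?_ ha3
    filter_upwards [hd] with z ⟨h, h1, h0⟩
    rw [div_le_iff₀ (by positivity)]
    have : ((z.1 : ℝ) ^ ((2 : ℝ) / 3)) ^ 3 = (z.1 : ℝ) ^ 2 := by
      rw [← Real.rpow_natCast, ← Real.rpow_mul (by linarith), ← Real.rpow_natCast]; norm_num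
    rw [← this, ← mul_pow]
    gcongr
  have hkn : Tendsto (fun z : ℕ × ℕ => (z.2 : ℝ) / z.1) (window p A) (nhds p) := by
    have := hu.const_sub p
    rw [sub_zero] at this
    refine this.congr' ?_
    filter_upwards [hd] with z ⟨_, h1, _⟩
    field_simp
    ring
  have hle : ∀ᶠ z in window p A, z.2 < z.1 := by
    filter_upwards [hkn.eventually_lt_const hp1, hd] with z hz ⟨_, h1, _⟩
    rw [div_lt_one (by linarith)] at hz
    exact_mod_cast hz
  have hmn : Tendsto (fun z : ℕ × ℕ => ((z.1 - z.2 : ℕ) : ℝ) / z.1) (window p A)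
      (nhds (1 - p)) := by
    refine (hkn.const_sub 1).congr' ?_
    filter_upwards [hle, hd] with z hz ⟨_, h1, _⟩
    rw [Nat.cast_sub hz.le]
    field_simp
  have hk : Tendsto (fun z : ℕ × ℕ => z.2) (window p A) atTop := by
    rw [← tendsto_natCast_atTop_iff (R := ℝ)]
    refine (hkn.pos_mul_atTop hp0 hfstR).congr' ?_
    filter_upwards [hd] with z ⟨_, h1, _⟩
    field_simp
  have hm : Tendsto (fun z : ℕ × ℕ => z.1 - z.2) (window p A) atTop := by
    rw [← tendsto_natCast_atTop_iff (R := ℝ)]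
    refine (hmn.pos_mul_atTop hq0 hfstR).congr' ?_
    filter_upwards [hd] with z ⟨_, h1, _⟩
    field_simp
  have hσ := Stirling.tendsto_stirlingSeq_sqrt_pi
  have hπ : 0 < √Real.pi := by positivity
  have T1 : Tendsto (fun z : ℕ × ℕ => √Real.pi * Stirling.stirlingSeq z.1 /
      (Stirling.stirlingSeq z.2 * Stirling.stirlingSeq (z.1 - z.2))) (window p A) (nhds 1) := by
    have := ((hσ.comp hfst).const_mul √Real.pi).div ((hσ.comp hk).mul (hσ.comp hm)) (by positivity)
    rwa [div_self (by positivity)] at this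
  have T2 : Tendsto (fun z : ℕ × ℕ => √(((z.1 : ℝ) * p / z.2) *
      ((z.1 : ℝ) * (1 - p) / (z.1 - z.2 : ℕ)))) (window p A) (nhds 1) := by
    have := (((tendsto_const_nhds (x := p)).div hkn hp0.ne').mul
      ((tendsto_const_nhds (x := 1 - p)).div hmn hq0.ne')).sqrt
    rw [div_self hp0.ne', div_self hq0.ne', one_mul, Real.sqrt_one] at this
    refine this.congr fun z => ?_
    congr 2 <;> rw [Pi.div_apply, div_div_eq_mul_div, mul_comm]
  set E : ℕ × ℕ → ℝ := fun z => (z.2 : ℝ) * Real.log ((z.1 : ℝ) * p / z.2) +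
      ((z.1 - z.2 : ℕ) : ℝ) * Real.log ((z.1 : ℝ) * (1 - p) / (z.1 - z.2 : ℕ)) +
      ((z.1 : ℝ) * p - z.2) ^ 2 / (2 * (z.1 : ℝ) * p * (1 - p)) with hE
  have hE0 : Tendsto E (window p A) (nhds 0) := by
    have hb := hc.const_mul (4 / p ^ 2 + 4 / (1 - p) ^ 2)
    rw [mul_zero] at hb
    refine squeeze_zero_norm' ?_ hb
    have hu' := hu.abs
    rw [abs_zero] at hu'
    filter_upwards [hd, hle, hu'.eventually_le_const (half_pos hp0),
      hu'.eventually_le_const (half_pos hq0)] with z ⟨_, h1, _⟩ hz g1 g2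
    have := abs_exponent_le (by linarith : (0 : ℝ) < z.1) hp0 hq0 (by ring) g1 g2
    rw [show (z.1 : ℝ) * p - (z.1 * p - z.2) = z.2 by ring,
      show (z.1 : ℝ) * (1 - p) + (z.1 * p - z.2) = z.1 - z.2 by ring, ← Nat.cast_sub hz.le] at this
    exact this
  have T3 : Tendsto (fun z => Real.exp (E z)) (window p A) (nhds 1) := by
    simpa using hE0.rexp
  have T := (T1.mul T2).mul T3
  rw [one_mul, one_mul] at T
  refine T.congr' ?_
  filter_upwards [hle, hk.eventually_ge_atTop 1, hd] with z hz hk1 ⟨_, h1, _⟩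
  obtain ⟨n, k⟩ := z
  simp only at hz hk1 h1
  obtain ⟨m, rfl⟩ := Nat.exists_eq_add_of_le hz.le
  have hm0 : m ≠ 0 := by omega
  have hk0 : k ≠ 0 := by omega
  have hkR : (0 : ℝ) < k := by positivity
  have hmR : (0 : ℝ) < m := by positivity
  simp only [hF, hE, Nat.add_sub_cancel_left]
  rw [binomial_stirling hp0 hq0 hk0 hm0, Real.exp_add, Real.exp_add, Real.exp_nat_mul,
    Real.exp_nat_mul, Real.exp_log (by positivity), Real.exp_log (by positivity)]
  ring
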